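/- (Zipf case of L₁.) Let m ≥ 1 be an integer and p > 0. Then ∫_0^∞ [1 − ∏_{j=1}^M (1 − S_m(j^{−p} u) e^{−j^{−p} u})] du ∼ M^p ln M as M → ∞. -/

import Mathlib

open MeasureTheory Filter

/-- `Sm m y` is the `m`-th partial sum of the exponential series. -/
noncomputable def Sm (m : ℕ) (y : ℝ) : ℝ := ∑ i ∈ Finset.range m, y ^ i / (Nat.factorial i)

lemma Sm_nonneg (m : ℕ) {y : ℝ} (hy : 0 ≤ y) : 0 ≤ Sm m y := by
  unfold Sm; positivity

lemma Sm_one_le (m : ℕ) (hm : 1 ≤ m) {y : ℝ} (hy : 0 ≤ y) : 1 ≤ Sm m y := by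
  unfold Sm
  have := Finset.single_le_sum (f := fun i => y ^ i / (Nat.factorial i : ℝ))
    (s := Finset.range m) (fun i _ => by positivity) (Finset.mem_range.2 hm)
  simpa using this

lemma Sm_le_exp (m : ℕ) {y : ℝ} (hy : 0 ≤ y) : Sm m y ≤ Real.exp y :=
  Real.sum_le_exp_of_nonneg hy m

lemma Sm_le (m : ℕ) {k y : ℝ} (hk : 0 < k) (hk1 : k ≤ 1) (hy : 0 ≤ y) :
    Sm m y ≤ (k ^ m)⁻¹ * Real.exp (k * y) := by
  have h1 : Sm m y ≤ (k ^ m)⁻¹ * Sm m (k * y) := by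
    unfold Sm
    rw [Finset.mul_sum]
    refine Finset.sum_le_sum fun i hi => ?_
    have hi' : i ≤ m := (Finset.mem_range.1 hi).le
    have h2 : k ^ m ≤ k ^ i := pow_le_pow_of_le_one hk.le hk1 hi'
    have h3 : 1 ≤ (k ^ m)⁻¹ * k ^ i := by
      rw [← div_eq_inv_mul, le_div_iff₀ (by positivity)]; linarith
    rw [mul_pow]
    calc y ^ i / (Nat.factorial i : ℝ) = 1 * (y ^ i / (Nat.factorial i : ℝ)) := by ring
      _ ≤ ((k ^ m)⁻¹ * k ^ i) * (y ^ i / (Nat.factorial i : ℝ)) := by gcongr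
      _ = _ := by ring
  refine h1.trans ?_
  gcongr
  exact Sm_le_exp m (by positivity)

/-- the elementary factor -/
noncomputable def gg (m : ℕ) (y : ℝ) : ℝ := Sm m y * Real.exp (-y)

lemma gg_le_one (m : ℕ) {y : ℝ} (hy : 0 ≤ y) : gg m y ≤ 1 := by
  unfold gg
  calc _ ≤ Real.exp y * Real.exp (-y) := by gcongr; exact Sm_le_exp m hy
    _ = 1 := by rw [← Real.exp_add]; simp

lemma gg_nonneg (m : ℕ) {y : ℝ} (hy : 0 ≤ y) : 0 ≤ gg m y :=
  mul_nonneg (Sm_nonneg m hy) (Real.exp_pos _).le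

lemma exp_le_gg (m : ℕ) (hm : 1 ≤ m) {y : ℝ} (hy : 0 ≤ y) : Real.exp (-y) ≤ gg m y :=
  le_mul_of_one_le_left (Real.exp_pos _).le (Sm_one_le m hm hy)

lemma gg_bound (m : ℕ) {c : ℝ} (hc : 1 < c) :
    ∃ C : ℝ, 0 < C ∧ ∀ y, 0 ≤ y → gg m y ≤ C * Real.exp (-(c⁻¹ * y)) := by
  have h1 : c⁻¹ < 1 := inv_lt_one_of_one_lt₀ hc
  have h0 : 0 < c⁻¹ := by positivity
  have hk : 0 < 1 - c⁻¹ := by linarith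
  refine ⟨((1 - c⁻¹) ^ m)⁻¹, by positivity, fun y hy => ?_⟩
  unfold gg
  calc _ ≤ ((1 - c⁻¹) ^ m)⁻¹ * Real.exp ((1 - c⁻¹) * y) * Real.exp (-y) := by
        gcongr; exact Sm_le m hk (by linarith) hy
    _ = _ := by rw [mul_assoc, ← Real.exp_add]; congr 2; ring

lemma one_sub_prod_le {ι : Type*} (s : Finset ι) (f : ι → ℝ)
    (h0 : ∀ i ∈ s, 0 ≤ f i) (h1 : ∀ i ∈ s, f i ≤ 1) :
    1 - ∏ i ∈ s, (1 - f i) ≤ ∑ i ∈ s, f i := by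
  classical
  induction s using Finset.induction_on with
  | empty => simp
  | insert a s ha ih =>
    rw [Finset.prod_insert ha, Finset.sum_insert ha]
    have ih' := ih (fun i hi => h0 i (Finset.mem_insert_of_mem hi))
      (fun i hi => h1 i (Finset.mem_insert_of_mem hi))
    have hp : ∏ i ∈ s, (1 - f i) ≤ 1 := Finset.prod_le_one
      (fun i hi => by linarith [h1 i (Finset.mem_insert_of_mem hi)])
      (fun i hi => by linarith [h0 i (Finset.mem_insert_of_mem hi)])
    have ha0 := h0 a (Finset.mem_insert_self a s)
    nlinarith

/-- the integrand -/
noncomputable def GG (m : ℕ) (p : ℝ) (M : ℕ) (u : ℝ) : ℝ :=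
  1 - ∏ j ∈ Finset.Icc 1 M, (1 - gg m ((j : ℝ) ^ (-p) * u))

lemma arg_nonneg (p : ℝ) (j : ℕ) {u : ℝ} (hu : 0 ≤ u) : 0 ≤ (j : ℝ) ^ (-p) * u := by
  positivity

lemma GG_nonneg (m : ℕ) (p : ℝ) (M : ℕ) {u : ℝ} (hu : 0 ≤ u) : 0 ≤ GG m p M u := by
  unfold GG
  rw [sub_nonneg]
  exact Finset.prod_le_one
    (fun j _ => by linarith [gg_le_one m (arg_nonneg p j hu)])
    (fun j _ => by linarith [gg_nonneg m (arg_nonneg p j hu)])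

lemma GG_le_one (m : ℕ) (p : ℝ) (M : ℕ) {u : ℝ} (hu : 0 ≤ u) : GG m p M u ≤ 1 := by
  unfold GG
  rw [sub_le_self_iff]
  exact Finset.prod_nonneg (fun j _ => by linarith [gg_le_one m (arg_nonneg p j hu)])

lemma GG_cont (m : ℕ) (p : ℝ) (M : ℕ) : Continuous (GG m p M) := by
  unfold GG gg Sm
  fun_prop

lemma GG_le (m : ℕ) {p : ℝ} (hp : 0 < p) {c C : ℝ} (hc : 1 < c) (hC : 0 < C)
    (hb : ∀ y, 0 ≤ y → gg m y ≤ C * Real.exp (-(c⁻¹ * y))) (M : ℕ) {u : ℝ} (hu : 0 ≤ u) :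
    GG m p M u ≤ M * C * Real.exp (-(c⁻¹ * (M : ℝ) ^ (-p)) * u) := by
  have h0 : 0 < c⁻¹ := by positivity
  refine (one_sub_prod_le _ _ (fun j _ => gg_nonneg m (arg_nonneg p j hu))
    (fun j _ => gg_le_one m (arg_nonneg p j hu))).trans ?_
  calc ∑ j ∈ Finset.Icc 1 M, gg m ((j : ℝ) ^ (-p) * u)
      ≤ ∑ j ∈ Finset.Icc 1 M, C * Real.exp (-(c⁻¹ * (M : ℝ) ^ (-p)) * u) := by
        refine Finset.sum_le_sum fun j hj => (hb _ (arg_nonneg p j hu)).trans ?_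
        obtain ⟨hj1, hj2⟩ := Finset.mem_Icc.1 hj
        have : (M : ℝ) ^ (-p) ≤ (j : ℝ) ^ (-p) :=
          Real.rpow_le_rpow_of_nonpos (by exact_mod_cast hj1) (by exact_mod_cast hj2)
            (by linarith)
        have h2 : c⁻¹ * ((M : ℝ) ^ (-p) * u) ≤ c⁻¹ * ((j : ℝ) ^ (-p) * u) := by gcongr
        gcongr
        linarith
    _ = _ := by simp; ring

lemma GG_integrable (m : ℕ) {p : ℝ} (hp : 0 < p) (M : ℕ) (hM : 1 ≤ M) :
    IntegrableOn (GG m p M) (Set.Ioi 0) := by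
  obtain ⟨C, hC, hb⟩ := gg_bound m (c := 2) (by norm_num)
  have hM0 : (0 : ℝ) < M := by exact_mod_cast hM
  have hk : (0 : ℝ) < 2⁻¹ * (M : ℝ) ^ (-p) := by positivity
  refine Integrable.mono' (((exp_neg_integrableOn_Ioi 0 hk)).const_mul (M * C))
    (GG_cont m p M).aestronglyMeasurable ?_
  filter_upwards [ae_restrict_mem measurableSet_Ioi] with u hu
  have hu' : 0 ≤ u := le_of_lt hu
  rw [Real.norm_of_nonneg (GG_nonneg m p M hu')]
  exact GG_le m hp (by norm_num) hC hb M hu'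

lemma upper (m : ℕ) {p : ℝ} (hp : 0 < p) {c : ℝ} (hc : 1 < c) :
    ∃ C : ℝ, ∀ M : ℕ, 2 ≤ M → ∫ u in Set.Ioi (0 : ℝ), GG m p M u ≤
      c * ((M : ℝ) ^ p * Real.log M) + C * (M : ℝ) ^ p := by
  obtain ⟨C, hC, hb⟩ := gg_bound m hc
  refine ⟨C * c, fun M hM => ?_⟩
  have hM0 : (0 : ℝ) < M := by exact_mod_cast (by omega : 0 < M)
  have hlog : 0 ≤ Real.log M := Real.log_natCast_nonneg M
  have hc0 : 0 < c := by linarith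
  have hk : (0 : ℝ) < c⁻¹ * (M : ℝ) ^ (-p) := by positivity
  set T : ℝ := c * ((M : ℝ) ^ p * Real.log M) with hT
  have hT0 : 0 ≤ T := by positivity
  have hI := GG_integrable m hp M (by omega)
  have hI1 : IntegrableOn (GG m p M) (Set.Ioc 0 T) := hI.mono_set Set.Ioc_subset_Ioi_self
  have hI2 : IntegrableOn (GG m p M) (Set.Ioi T) := hI.mono_set (Set.Ioi_subset_Ioi hT0)
  rw [← Set.Ioc_union_Ioi_eq_Ioi hT0, setIntegral_union (Set.Ioc_disjoint_Ioi le_rfl)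
    measurableSet_Ioi hI1 hI2]
  have e1 : ∫ u in Set.Ioc 0 T, GG m p M u ≤ T := by
    have := setIntegral_mono_on (g := fun _ => (1 : ℝ)) hI1 (by simp) measurableSet_Ioc
      (fun u hu => GG_le_one m p M hu.1.le)
    simpa [hT0] using this
  have e2 : ∫ u in Set.Ioi T, GG m p M u ≤ C * c * (M : ℝ) ^ p := by
    have := setIntegral_mono_on hI2 ((exp_neg_integrableOn_Ioi T hk).const_mul (M * C))
      measurableSet_Ioi (fun u hu => GG_le m hp hc hC hb M (hT0.trans (le_of_lt hu)))
    refine this.trans (le_of_eq ?_)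
    rw [integral_const_mul, integral_exp_mul_Ioi (by linarith)]
    have h3 : -(c⁻¹ * (M : ℝ) ^ (-p)) * T = - Real.log M := by
      rw [hT, Real.rpow_neg hM0.le]
      have : (0 : ℝ) < (M : ℝ) ^ p := by positivity
      field_simp
    rw [h3, Real.exp_neg, Real.exp_log hM0, Real.rpow_neg hM0.le]
    have : (0 : ℝ) < (M : ℝ) ^ p := by positivity
    field_simp
  linarith

lemma GG_ge (m : ℕ) (hm : 1 ≤ m) {p : ℝ} (hp : 0 < p) {a θ : ℝ} (ha : 0 < a) (hθ : 0 < θ)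
    (hθ1 : θ < 1) (M : ℕ) (hM : 2 ≤ M) {u : ℝ} (hu : 0 ≤ u)
    (hu2 : u ≤ a * ((M : ℝ) ^ p * Real.log M)) :
    1 - Real.exp (-((1 - θ) * (M : ℝ) ^ (1 - a * θ ^ (-p)))) ≤ GG m p M u := by
  have hM0 : (0 : ℝ) < M := by exact_mod_cast (by omega : 0 < M)
  have hlog : 0 ≤ Real.log M := Real.log_natCast_nonneg M
  unfold GG
  have h1 : ∏ j ∈ Finset.Icc 1 M, (1 - gg m ((j : ℝ) ^ (-p) * u)) ≤
      Real.exp (- ∑ j ∈ Finset.Icc 1 M, Real.exp (-((j : ℝ) ^ (-p) * u))) := by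
    rw [← Finset.sum_neg_distrib, Real.exp_sum]
    refine Finset.prod_le_prod
      (fun j _ => by linarith [gg_le_one m (arg_nonneg p j hu)]) fun j _ => ?_
    refine le_trans ?_ (Real.one_sub_le_exp_neg _)
    linarith [exp_le_gg m hm (arg_nonneg p j hu)]
  have h2 : (1 - θ) * (M : ℝ) ^ (1 - a * θ ^ (-p)) ≤
      ∑ j ∈ Finset.Icc 1 M, Real.exp (-((j : ℝ) ^ (-p) * u)) := by
    have hfl : ⌊θ * M⌋₊ ≤ M := by
      apply Nat.floor_le_of_le
      nlinarith
    calc (1 - θ) * (M : ℝ) ^ (1 - a * θ ^ (-p))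
        = (M - θ * M) * Real.exp (-(a * θ ^ (-p) * Real.log M)) := by
          rw [sub_eq_add_neg 1 (a * θ ^ (-p)), Real.rpow_add hM0, Real.rpow_one,
            Real.rpow_def_of_pos hM0]
          rw [show Real.log M * -(a * θ ^ (-p)) = -(a * θ ^ (-p) * Real.log M) by ring]
          ring
      _ ≤ (M - ⌊θ * M⌋₊ : ℝ) * Real.exp (-(a * θ ^ (-p) * Real.log M)) := by
          gcongr
          exact Nat.floor_le (by positivity)
      _ = ∑ j ∈ Finset.Ioc ⌊θ * M⌋₊ M, Real.exp (-(a * θ ^ (-p) * Real.log M)) := by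
          simp [Nat.cast_sub hfl]
      _ ≤ ∑ j ∈ Finset.Ioc ⌊θ * M⌋₊ M, Real.exp (-((j : ℝ) ^ (-p) * u)) := by
          refine Finset.sum_le_sum fun j hj => ?_
          have hj' : θ * M < j := Nat.lt_of_floor_lt (Finset.mem_Ioc.1 hj).1
          refine Real.exp_le_exp.2 (neg_le_neg ?_)
          calc (j : ℝ) ^ (-p) * u ≤ (θ * M) ^ (-p) * (a * ((M : ℝ) ^ p * Real.log M)) := by
                refine mul_le_mul ?_ hu2 hu (by positivity)
                exact Real.rpow_le_rpow_of_nonpos (by positivity) hj'.le (by linarith)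
            _ = a * θ ^ (-p) * Real.log M := by
                rw [Real.mul_rpow hθ.le hM0.le, Real.rpow_neg hM0.le]
                have : (0 : ℝ) < (M : ℝ) ^ p := by positivity
                field_simp
      _ ≤ _ := by
          refine Finset.sum_le_sum_of_subset_of_nonneg ?_ (fun _ _ _ => (Real.exp_pos _).le)
          intro j hj
          have := Finset.mem_Ioc.1 hj
          exact Finset.mem_Icc.2 ⟨by omega, this.2⟩
  have h3 := Real.exp_le_exp.2 (neg_le_neg h2)
  linarith

lemma lower (m : ℕ) (hm : 1 ≤ m) {p : ℝ} (hp : 0 < p) {a θ : ℝ} (ha : 0 < a) (hθ : 0 < θ)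
    (hθ1 : θ < 1) (M : ℕ) (hM : 2 ≤ M) :
    (1 - Real.exp (-((1 - θ) * (M : ℝ) ^ (1 - a * θ ^ (-p))))) *
      (a * ((M : ℝ) ^ p * Real.log M)) ≤ ∫ u in Set.Ioi (0 : ℝ), GG m p M u := by
  have hlog : 0 ≤ Real.log M := Real.log_natCast_nonneg M
  set T : ℝ := a * ((M : ℝ) ^ p * Real.log M) with hT
  have hT0 : 0 ≤ T := by positivity
  have hI := GG_integrable m hp M (by omega)
  have hI1 : IntegrableOn (GG m p M) (Set.Ioc 0 T) := hI.mono_set Set.Ioc_subset_Ioi_self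
  have h1 : ∫ u in Set.Ioc 0 T, GG m p M u ≤ ∫ u in Set.Ioi (0 : ℝ), GG m p M u := by
    refine setIntegral_mono_set hI ?_ (Set.Ioc_subset_Ioi_self.eventuallyLE)
    filter_upwards [ae_restrict_mem measurableSet_Ioi] with u hu
    exact GG_nonneg m p M (le_of_lt hu)
  refine le_trans ?_ h1
  have := setIntegral_mono_on
    (f := fun _ => 1 - Real.exp (-((1 - θ) * (M : ℝ) ^ (1 - a * θ ^ (-p))))) (by simp) hI1
    measurableSet_Ioc
    (fun u hu => GG_ge m hm hp ha hθ hθ1 M hM hu.1.le hu.2)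
  rw [setIntegral_const] at this
  simpa [hT0, mul_comm] using this

theorem zipf_L1_asymp (m : ℕ) (hm : 1 ≤ m) (p : ℝ) (hp : 0 < p) :
    Tendsto (fun M : ℕ =>
        (∫ u in Set.Ioi (0 : ℝ),
            (1 - ∏ j ∈ Finset.Icc 1 M,
              (1 - Sm m ((j : ℝ) ^ (-p) * u) * Real.exp (-((j : ℝ) ^ (-p) * u))))) /
          ((M : ℝ) ^ p * Real.log M))
      atTop (nhds 1) := by
  change Tendsto (fun M : ℕ =>
        (∫ u in Set.Ioi (0 : ℝ), GG m p M u) / ((M : ℝ) ^ p * Real.log M)) atTop (nhds 1)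
  have hlogt : Tendsto (fun M : ℕ => Real.log M) atTop atTop :=
    Real.tendsto_log_atTop.comp tendsto_natCast_atTop_atTop
  have hpos : ∀ M : ℕ, 2 ≤ M → 0 < Real.log M ∧ 0 < (M : ℝ) ^ p := fun M hM => by
    have h1 : (1 : ℝ) < M := by exact_mod_cast (by omega : 1 < M)
    exact ⟨Real.log_pos h1, by positivity⟩
  rw [tendsto_order]
  constructor
  · intro l hl
    obtain ⟨a, hla, ha1⟩ := exists_between (max_lt hl one_pos)
    have ha0 : 0 < a := (le_max_right _ _).trans_lt hla
    have hla' : l < a := (le_max_left _ _).trans_lt hla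
    obtain ⟨b, hab, hb1⟩ := exists_between ha1
    have hb0 : 0 < b := ha0.trans hab
    set θ : ℝ := (a / b) ^ p⁻¹ with hθd
    have hθ : 0 < θ := by positivity
    have hθ1 : θ < 1 := Real.rpow_lt_one (by positivity) ((div_lt_one hb0).2 hab)
      (by positivity)
    have hθb : a * θ ^ (-p) = b := by
      rw [Real.rpow_neg hθ.le, hθd, ← Real.rpow_mul (by positivity), inv_mul_cancel₀ hp.ne',
        Real.rpow_one]
      field_simp
    have hlim : Tendsto (fun M : ℕ => (1 - Real.exp (-((1 - θ) * (M : ℝ) ^ (1 - b)))) * a)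
        atTop (nhds ((1 - 0) * a)) := by
      refine (tendsto_const_nhds.sub ?_).mul_const a
      refine Real.tendsto_exp_neg_atTop_nhds_zero.comp ?_
      refine Tendsto.const_mul_atTop (by linarith) ?_
      exact (tendsto_rpow_atTop (by linarith)).comp tendsto_natCast_atTop_atTop
    rw [sub_zero, one_mul] at hlim
    filter_upwards [hlim.eventually_const_lt hla', eventually_ge_atTop 2] with M h1 hM
    obtain ⟨hl0, hp0⟩ := hpos M hM
    refine h1.trans_le ?_
    rw [le_div_iff₀ (by positivity)]
    have := lower m hm hp ha0 hθ hθ1 M hM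
    rw [hθb] at this
    linarith
  · intro r hr
    obtain ⟨c, hc1, hcr⟩ := exists_between hr
    obtain ⟨C, hC⟩ := upper m hp hc1
    have hlim : Tendsto (fun M : ℕ => c + C / Real.log M) atTop (nhds (c + 0)) :=
      tendsto_const_nhds.add (hlogt.const_div_atTop C)
    rw [add_zero] at hlim
    filter_upwards [hlim.eventually_lt_const hcr, eventually_ge_atTop 2] with M h1 hM
    obtain ⟨hl0, hp0⟩ := hpos M hM
    refine lt_of_le_of_lt ?_ h1
    rw [div_le_iff₀ (by positivity)]
    refine (hC M hM).trans (le_of_eq ?_)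
    field_simp
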